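/- arXiv:1706.07880 — 5 statements merged into one kernel-verified Lean document; each statement's English description precedes it below -/
import Mathlib

section
/- (Theorem 1: convergence of CDSGD with fixed step size, strongly convex case.) Let (Ω, ℱ, P) be a probability space with filtration (ℱ_k)_{k∈ℕ}. Let V : ℝ^N → ℝ be differentiable, Ĥ-strongly convex (Ĥ > 0) with unique minimizer x* and V* = V(x*), and with ∇V Lipschitz continuous with constant γ̂ ≥ Ĥ. Let x₁ ∈ ℝ^N, and let (X_k), (G_k) be sequences of random vectors with X₁ = x₁ almost surely, X_k ℱ_k-measurable, G_k ℱ_{k+1}-measurable with E[‖G_k‖²] < ∞, and X_{k+1} = X_k − α·G_k. Assume for constants ζ₁ > 0, Q ≥ 0, Q_m ≥ ζ₁² that almost surely ⟨∇V(X_k), E[G_k | ℱ_k]⟩ ≥ ζ₁·‖∇V(X_k)‖² and E[‖G_k‖² | ℱ_k] ≤ Q + Q_m·‖∇V(X_k)‖² for all k, and that the step size satisfies 0 < α ≤ ζ₁/(γ̂·Q_m). Then for all k ≥ 1, E[V(X_k) − V*] ≤ (1 − α·Ĥ·ζ₁)^{k−1}·(V(x₁) − V*) + (α²·γ̂·Q/2)·Σ_{l=0}^{k−1}(1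 − α·Ĥ·ζ₁)^l. -/
open MeasureTheory Filter
open scoped RealInnerProductSpace BigOperators


lemma aux_descent {N : ℕ} (V : EuclideanSpace ℝ (Fin N) → ℝ) (γh : ℝ) (hγ : 0 ≤ γh)
    (hdiff : Differentiable ℝ V) (hLip : LipschitzWith γh.toNNReal (gradient V))
    (x d : EuclideanSpace ℝ (Fin N)) :
    V (x + d) ≤ V x + ⟪gradient V x, d⟫ + γh / 2 * ‖d‖ ^ 2 := by
  have hder : ∀ t : ℝ, HasDerivAt
      (fun t : ℝ => V (x + t • d) - t * ⟪gradient V x, d⟫ - γh / 2 * ‖d‖ ^ 2 * t ^ 2)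
      (⟪gradient V (x + t • d), d⟫ - ⟪gradient V x, d⟫ - γh * ‖d‖ ^ 2 * t) t := by
    intro t
    have h1 : HasDerivAt (fun t : ℝ => x + t • d) d t := by
      simpa using ((hasDerivAt_id t).smul_const d).const_add x
    have h2 := (hdiff (x + t • d)).hasGradientAt.hasFDerivAt.comp_hasDerivAt t h1
    have h3 := (h2.sub ((hasDerivAt_id t).mul_const ⟪gradient V x, d⟫)).sub
      ((hasDerivAt_pow 2 t).const_mul (γh / 2 * ‖d‖ ^ 2))
    convert! h3 using 1
    simp
    ring
  have hanti : AntitoneOn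
      (fun t : ℝ => V (x + t • d) - t * ⟪gradient V x, d⟫ - γh / 2 * ‖d‖ ^ 2 * t ^ 2)
      (Set.Icc 0 1) := by
    apply antitoneOn_of_deriv_nonpos (convex_Icc 0 1)
    · exact fun t _ => (hder t).continuousAt.continuousWithinAt
    · exact fun t _ => (hder t).differentiableAt.differentiableWithinAt
    · intro t ht
      rw [interior_Icc] at ht
      rw [(hder t).deriv, ← inner_sub_left]
      have h1 := real_inner_le_norm (gradient V (x + t • d) - gradient V x) d
      have h2 := hLip.dist_le_mul (x + t • d) x
      rw [dist_eq_norm, dist_eq_norm, Real.coe_toNNReal _ hγ, add_sub_cancel_left, norm_smul,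
        Real.norm_of_nonneg ht.1.le] at h2
      have h3 := mul_le_mul_of_nonneg_right h2 (norm_nonneg d)
      nlinarith
  have h := hanti (Set.left_mem_Icc.2 zero_le_one) (Set.right_mem_Icc.2 zero_le_one) zero_le_one
  simp only [one_smul, zero_smul, add_zero] at h
  linarith

lemma aux_pl {N : ℕ} (V : EuclideanSpace ℝ (Fin N) → ℝ) (Hh : ℝ) (hHh : 0 < Hh)
    (hsc : ∀ x y : EuclideanSpace ℝ (Fin N),
      V y ≥ V x + ⟪gradient V x, y - x⟫ + (Hh / 2) * ‖y - x‖ ^ 2)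
    (x y : EuclideanSpace ℝ (Fin N)) :
    2 * Hh * (V x - V y) ≤ ‖gradient V x‖ ^ 2 := by
  have h1 := hsc x y
  have h2 := neg_le_of_abs_le (abs_real_inner_le_norm (gradient V x) (y - x))
  have h3 := sq_nonneg (‖gradient V x‖ - Hh * ‖y - x‖)
  nlinarith

lemma aux_inner_int {N : ℕ} {Ω : Type*} {m0 : MeasurableSpace Ω} {P : Measure Ω}
    {f g : Ω → EuclideanSpace ℝ (Fin N)} (hf : MemLp f 2 P) (hg : MemLp g 2 P) :
    Integrable (fun ω => ⟪f ω, g ω⟫) P := by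
  have h1 := (memLp_two_iff_integrable_sq_norm hf.1).1 hf
  have h2 := (memLp_two_iff_integrable_sq_norm hg.1).1 hg
  refine (h1.add h2).mono' (hf.1.inner hg.1) (ae_of_all _ fun ω => ?_)
  have h3 := norm_inner_le_norm (𝕜 := ℝ) (f ω) (g ω)
  simp only [Pi.add_apply]
  nlinarith [sq_nonneg (‖f ω‖ - ‖g ω‖), sq_nonneg (‖f ω‖), sq_nonneg (‖g ω‖)]

lemma aux_inner_condExp {N : ℕ} {Ω : Type*} {m m0 : MeasurableSpace Ω} {P : Measure Ω}
    [IsProbabilityMeasure P] (hm : m ≤ m0)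
    {f g : Ω → EuclideanSpace ℝ (Fin N)} (hf : MemLp f 2 P) (hg : MemLp g 2 P)
    (hfm : StronglyMeasurable[m] f) :
    Integrable (fun ω => ⟪f ω, (P[g|m]) ω⟫) P ∧
    ∫ ω, ⟪f ω, (P[g|m]) ω⟫ ∂P = ∫ ω, ⟪f ω, g ω⟫ ∂P := by
  have h := condExp_bilin_of_stronglyMeasurable_left (innerSL ℝ) hfm (aux_inner_int hf hg)
    (hg.integrable (by norm_num))
  have h' : P[fun ω => ⟪f ω, g ω⟫|m] =ᵐ[P] fun ω => ⟪f ω, (P[g|m]) ω⟫ := h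
  exact ⟨integrable_condExp.congr h', by rw [← integral_congr_ae h', integral_condExp hm]⟩

/-- Theorem 1 (convergence of CDSGD with fixed step size, strongly convex case):
`E[V(X_k) − V*] ≤ (1 − α·Ĥ·ζ₁)^{k−1}·(V(x₁) − V*) + (α²·γ̂·Q/2)·Σ_{l=0}^{k−1}(1 − α·Ĥ·ζ₁)^l`. -/
theorem cdsgd_fixed_step_strongly_convex {N : ℕ} {Ω : Type*} {m0 : MeasurableSpace Ω}
    (P : Measure Ω) [IsProbabilityMeasure P] (ℱ : Filtration ℕ m0)
    (V : EuclideanSpace ℝ (Fin N) → ℝ) (Hh γh : ℝ)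
    (hHh : 0 < Hh) (hHγ : Hh ≤ γh)
    (hdiff : Differentiable ℝ V)
    (hsc : ∀ x y : EuclideanSpace ℝ (Fin N),
      V y ≥ V x + ⟪gradient V x, y - x⟫ + (Hh / 2) * ‖y - x‖ ^ 2)
    (hLip : LipschitzWith γh.toNNReal (gradient V))
    (xstar : EuclideanSpace ℝ (Fin N)) (hmin : ∀ x, V xstar ≤ V x)
    (x₁ : EuclideanSpace ℝ (Fin N))
    (X G : ℕ → Ω → EuclideanSpace ℝ (Fin N))
    (α ζ₁ Q Qm : ℝ) (hζ₁ : 0 < ζ₁) (hQ : 0 ≤ Q) (hQm : ζ₁ ^ 2 ≤ Qm)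
    (hα : 0 < α) (hαle : α ≤ ζ₁ / (γh * Qm))
    (hX1 : ∀ᵐ ω ∂P, X 1 ω = x₁)
    (hXmeas : ∀ k, StronglyMeasurable[ℱ k] (X k))
    (hGmeas : ∀ k, StronglyMeasurable[ℱ (k + 1)] (G k))
    (hGint : ∀ k, Integrable (fun ω => ‖G k ω‖ ^ 2) P)
    (hupdate : ∀ k, 1 ≤ k → ∀ ω, X (k + 1) ω = X k ω - α • G k ω)
    (hinner : ∀ k, 1 ≤ k → ∀ᵐ ω ∂P,
      ζ₁ * ‖gradient V (X k ω)‖ ^ 2 ≤ ⟪gradient V (X k ω), (P[G k|ℱ k]) ω⟫)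
    (hsecond : ∀ k, 1 ≤ k → ∀ᵐ ω ∂P,
      (P[(fun ω' => ‖G k ω'‖ ^ 2)|ℱ k]) ω ≤ Q + Qm * ‖gradient V (X k ω)‖ ^ 2) :
    ∀ k, 1 ≤ k →
      (∫ ω, (V (X k ω) - V xstar) ∂P) ≤
        (1 - α * Hh * ζ₁) ^ (k - 1) * (V x₁ - V xstar)
          + α ^ 2 * γh * Q / 2 * ∑ l ∈ Finset.range k, (1 - α * Hh * ζ₁) ^ l := by
  have hγ : 0 < γh := hHh.trans_le hHγ
  have hQm0 : 0 < Qm := (pow_pos hζ₁ 2).trans_le hQm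
  have hαm : α * (γh * Qm) ≤ ζ₁ := (le_div_iff₀ (mul_pos hγ hQm0)).1 hαle
  have hρ : 0 ≤ 1 - α * Hh * ζ₁ := by
    have h1 : α * γh * ζ₁ ^ 2 ≤ ζ₁ := by
      have := mul_le_mul_of_nonneg_left hQm (mul_pos hα hγ).le
      linarith
    have h2 : α * γh * ζ₁ ≤ 1 := by
      by_contra! hc
      nlinarith
    have h3 := mul_le_mul_of_nonneg_left hHγ (mul_pos hα hζ₁).le
    linarith
  have hGL : ∀ k, MemLp (G k) 2 P := fun k =>
    (memLp_two_iff_integrable_sq_norm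
      ((hGmeas k).mono (ℱ.le _)).aestronglyMeasurable).2 (hGint k)
  have hXL : ∀ k, 1 ≤ k → MemLp (X k) 2 P := by
    intro k hk
    induction k, hk using Nat.le_induction with
    | base =>
      have hc : MemLp (fun _ : Ω => x₁) 2 P := memLp_const x₁
      refine hc.ae_eq ?_
      filter_upwards [hX1] with ω h using h.symm
    | succ k hk ih =>
      rw [funext (hupdate k hk)]
      exact ih.sub ((hGL k).const_smul α)
  have hgm : ∀ k, StronglyMeasurable[ℱ k] (fun ω => gradient V (X k ω)) := fun k =>
    hLip.continuous.comp_stronglyMeasurable (hXmeas k)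
  have hgL : ∀ k, 1 ≤ k → MemLp (fun ω => gradient V (X k ω)) 2 P := by
    intro k hk
    have hb : MemLp (fun ω => ‖gradient V 0‖ + γh * ‖X k ω‖) 2 P :=
      (memLp_const (‖gradient V 0‖)).add ((hXL k hk).norm.const_mul γh)
    refine hb.mono' ((hgm k).mono (ℱ.le _)).aestronglyMeasurable (ae_of_all _ fun ω => ?_)
    have h2 := hLip.dist_le_mul (X k ω) 0
    rw [dist_eq_norm, dist_eq_norm, Real.coe_toNNReal _ hγ.le, sub_zero] at h2
    have h3 := norm_sub_norm_le (gradient V (X k ω)) (gradient V 0)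
    linarith
  have hVint : ∀ k, 1 ≤ k → Integrable (fun ω => V (X k ω)) P := by
    intro k hk
    have hi1 := aux_inner_int (memLp_const (μ := P) (gradient V 0)) (hXL k hk)
    have hi2 := (memLp_two_iff_integrable_sq_norm (hXL k hk).1).1 (hXL k hk)
    refine integrable_of_le_of_le
      (hdiff.continuous.comp_stronglyMeasurable
        ((hXmeas k).mono (ℱ.le _))).aestronglyMeasurable
      (ae_of_all _ fun ω => hmin (X k ω)) (ae_of_all _ fun ω => ?_)
      (integrable_const (V xstar))
      (((integrable_const (V 0)).add hi1).add (hi2.const_mul (γh / 2)))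
    have := aux_descent V γh hγ.le hdiff hLip 0 (X k ω)
    rw [zero_add] at this
    exact this
  have hstep : ∀ k, 1 ≤ k → (∫ ω, (V (X (k + 1) ω) - V xstar) ∂P) ≤
      (1 - α * Hh * ζ₁) * (∫ ω, (V (X k ω) - V xstar) ∂P) + α ^ 2 * γh * Q / 2 := by
    intro k hk
    have hG2 := hGint k
    have hg2 := (memLp_two_iff_integrable_sq_norm (hgL k hk).1).1 (hgL k hk)
    have hin := aux_inner_int (hgL k hk) (hGL k)
    obtain ⟨hcin, hceq⟩ := aux_inner_condExp (ℱ.le k) (hgL k hk) (hGL k) (hgm k)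
    have hV := hVint k hk
    -- descent
    have e1 : (∫ ω, V (X (k + 1) ω) ∂P) ≤ (∫ ω, V (X k ω) ∂P)
        - α * (∫ ω, ⟪gradient V (X k ω), G k ω⟫ ∂P)
        + γh / 2 * α ^ 2 * (∫ ω, ‖G k ω‖ ^ 2 ∂P) := by
      rw [← integral_const_mul, ← integral_const_mul, ← integral_sub hV (hin.const_mul α),
        ← integral_add (f := fun ω => V (X k ω) - α * ⟪gradient V (X k ω), G k ω⟫)
          (hV.sub (hin.const_mul α)) (hG2.const_mul _)]
      refine integral_mono (hVint (k + 1) (by omega))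
        ((hV.sub (hin.const_mul α)).add (hG2.const_mul _)) fun ω => ?_
      have := aux_descent V γh hγ.le hdiff hLip (X k ω) (-(α • G k ω))
      rw [← sub_eq_add_neg, ← hupdate k hk ω, inner_neg_right, inner_smul_right, norm_neg,
        norm_smul, Real.norm_of_nonneg hα.le] at this
      simp only [Pi.add_apply, Pi.sub_apply]
      nlinarith
    have e2 : ζ₁ * (∫ ω, ‖gradient V (X k ω)‖ ^ 2 ∂P) ≤
        ∫ ω, ⟪gradient V (X k ω), G k ω⟫ ∂P := by
      rw [← hceq, ← integral_const_mul]
      exact integral_mono_ae (hg2.const_mul _) hcin (hinner k hk)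
    have e3 : (∫ ω, ‖G k ω‖ ^ 2 ∂P) ≤ Q + Qm * ∫ ω, ‖gradient V (X k ω)‖ ^ 2 ∂P := by
      rw [← integral_condExp (ℱ.le k)]
      refine (integral_mono_ae integrable_condExp
        ((integrable_const Q).add (hg2.const_mul Qm)) (hsecond k hk)).trans_eq ?_
      rw [integral_add' (integrable_const Q) (hg2.const_mul Qm), integral_const_mul]
      simp
    have e4 : 2 * Hh * (∫ ω, (V (X k ω) - V xstar) ∂P) ≤
        ∫ ω, ‖gradient V (X k ω)‖ ^ 2 ∂P := by
      rw [← integral_const_mul]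
      exact integral_mono ((hV.sub (integrable_const _)).const_mul _) hg2
        fun ω => aux_pl V Hh hHh hsc (X k ω) xstar
    have e5 : ∀ j, 1 ≤ j → (∫ ω, (V (X j ω) - V xstar) ∂P) = (∫ ω, V (X j ω) ∂P) - V xstar := by
      intro j hj
      rw [integral_sub (hVint j hj) (integrable_const _)]
      simp
    have hg0 : 0 ≤ ∫ ω, ‖gradient V (X k ω)‖ ^ 2 ∂P := integral_nonneg fun ω => sq_nonneg _
    rw [e5 (k + 1) (by omega)]
    have e6 := e5 k hk
    generalize (∫ ω, (V (X k ω) - V xstar) ∂P) = D at *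
    generalize (∫ ω, ‖gradient V (X k ω)‖ ^ 2 ∂P) = S at *
    have f1 := mul_le_mul_of_nonneg_left e2 hα.le
    have f2 := mul_le_mul_of_nonneg_left e3 (show 0 ≤ γh / 2 * α ^ 2 by positivity)
    have f3 := mul_le_mul_of_nonneg_right hαm (show 0 ≤ α / 2 * S by positivity)
    have f4 := mul_le_mul_of_nonneg_left e4 (show 0 ≤ α * ζ₁ / 2 by positivity)
    linarith
  intro k hk
  induction k, hk using Nat.le_induction with
  | base =>
    have : (∫ ω, (V (X 1 ω) - V xstar) ∂P) = V x₁ - V xstar := by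
      rw [integral_congr_ae (g := fun _ => V x₁ - V xstar)
        (by filter_upwards [hX1] with ω h; rw [h])]
      simp
    rw [this]
    simp
    positivity
  | succ k hk ih =>
    refine (hstep k hk).trans ?_
    have h1 := mul_le_mul_of_nonneg_left ih hρ
    rw [geom_sum_succ]
    obtain ⟨j, rfl⟩ : ∃ j, k = j + 1 := ⟨k - 1, by omega⟩
    simp only [Nat.add_sub_cancel] at *
    rw [pow_succ (1 - α * Hh * ζ₁) j]
    linarith
end

section
/- (Neighborhood of optimality for CDSGD with fixed step size.) Under the hypotheses of Theorem 1 (filtration, update X_{k+1} = X_k − α·G_k, V Ĥ-strongly convex and γ̂-smooth with Ĥ ≤ γ̂, minimizer value V*, conditional bounds ⟨∇V(X_k), E[G_k | ℱ_k]⟩ ≥ ζ₁‖∇V(X_k)‖² and E[‖G_k‖² | ℱ_k] ≤ Q + Q_m‖∇V(X_k)‖² with ζ₁ > 0, Q ≥ 0, Q_m ≥ ζ₁², and 0 < α ≤ ζ₁/(γ̂·Q_m)), the sequence of expected Lyapunov gaps satisfies limsup_{k→∞} E[V(X_k) − V*] ≤ α·γ̂·Q/(2·Ĥ·ζ₁).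 -/
open MeasureTheory Filter
open scoped RealInnerProductSpace BigOperators

/-- Descent lemma for functions with Lipschitz gradient. -/
theorem descent_aux {N : ℕ} (V : EuclideanSpace ℝ (Fin N) → ℝ) (γ : ℝ) (hγ : 0 ≤ γ)
    (hdiff : Differentiable ℝ V) (hLip : LipschitzWith γ.toNNReal (gradient V))
    (x d : EuclideanSpace ℝ (Fin N)) :
    V (x + d) ≤ V x + ⟪gradient V x, d⟫ + (γ / 2) * ‖d‖ ^ 2 := by
  let h : ℝ → ℝ := fun t => V (x + t • d) - t * ⟪gradient V x, d⟫ - γ / 2 * t ^ 2 * ‖d‖ ^ 2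
  have hder : ∀ t : ℝ, HasDerivAt h
      (⟪gradient V (x + t • d), d⟫ - ⟪gradient V x, d⟫ - γ * t * ‖d‖ ^ 2) t := by
    intro t
    have h1 : HasDerivAt (fun t : ℝ => x + t • d) d t := by
      simpa using ((hasDerivAt_id t).smul_const d).const_add x
    have h2 : HasDerivAt (fun t : ℝ => V (x + t • d)) ⟪gradient V (x + t • d), d⟫ t := by
      have := (hdiff (x + t • d)).hasGradientAt.hasFDerivAt.comp_hasDerivAt t h1
      exact this
    have h3 : HasDerivAt (fun t : ℝ => t * ⟪gradient V x, d⟫) ⟪gradient V x, d⟫ t := by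
      simpa using (hasDerivAt_id t).mul_const ⟪gradient V x, d⟫
    have h4 : HasDerivAt (fun t : ℝ => γ / 2 * t ^ 2 * ‖d‖ ^ 2) (γ * t * ‖d‖ ^ 2) t := by
      have := ((hasDerivAt_pow 2 t).const_mul (γ / 2)).mul_const (‖d‖ ^ 2)
      refine this.congr_deriv ?_
      push_cast
      ring
    exact (h2.sub h3).sub h4
  have hanti : AntitoneOn h (Set.Icc 0 1) := by
    apply antitoneOn_of_deriv_nonpos (convex_Icc 0 1)
    · exact fun t _ => (hder t).continuousAt.continuousWithinAt
    · exact fun t _ => (hder t).differentiableAt.differentiableWithinAt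
    · intro t ht
      rw [interior_Icc] at ht
      rw [(hder t).deriv, ← inner_sub_left]
      have h5 := real_inner_le_norm (gradient V (x + t • d) - gradient V x) d
      have h6 := hLip.norm_sub_le (x + t • d) x
      rw [Real.coe_toNNReal _ hγ, add_sub_cancel_left, norm_smul, Real.norm_of_nonneg ht.1.le] at h6
      nlinarith [norm_nonneg d]
  have := hanti (Set.left_mem_Icc.2 zero_le_one) (Set.right_mem_Icc.2 zero_le_one) zero_le_one
  simp only [h, one_smul, zero_smul, add_zero] at this
  linarith

/-- Polyak-Lojasiewicz inequality from strong convexity. -/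
theorem pl_aux {N : ℕ} (V : EuclideanSpace ℝ (Fin N) → ℝ) (H : ℝ) (hH : 0 < H)
    (hsc : ∀ x y : EuclideanSpace ℝ (Fin N),
      V y ≥ V x + ⟪gradient V x, y - x⟫ + (H / 2) * ‖y - x‖ ^ 2)
    (x y : EuclideanSpace ℝ (Fin N)) :
    2 * H * (V x - V y) ≤ ‖gradient V x‖ ^ 2 := by
  have h1 := hsc x y
  have h2 := neg_le_of_abs_le (abs_real_inner_le_norm (gradient V x) (y - x))
  nlinarith [sq_nonneg (‖gradient V x‖ - H * ‖y - x‖)]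

theorem limsup_aux (e : ℕ → ℝ) (ρ C : ℝ) (h0 : ∀ k, 0 ≤ e k) (hρ0 : 0 ≤ ρ) (hρ1 : ρ < 1)
    (hstep : ∀ k, 1 ≤ k → e (k + 1) - C ≤ ρ * (e k - C)) :
    limsup e atTop ≤ C := by
  have hb : ∀ k, e (k + 1) ≤ C + ρ ^ k * (e 1 - C) := by
    intro k
    induction k with
    | zero => simp
    | succ k ih =>
      have h1 := hstep (k + 1) (by omega)
      have h2 : ρ * (e (k + 1) - C) ≤ ρ * (ρ ^ k * (e 1 - C)) :=
        mul_le_mul_of_nonneg_left (by linarith) hρ0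
      rw [pow_succ]
      linarith
  have ht : Tendsto (fun k : ℕ => C + ρ ^ k * (e 1 - C)) atTop (nhds C) := by
    simpa using ((tendsto_pow_atTop_nhds_zero_of_lt_one hρ0 hρ1).mul_const (e 1 - C)).const_add C
  rw [← limsup_nat_add e 1, ← ht.limsup_eq]
  refine limsup_le_limsup (Eventually.of_forall hb) ?_ ht.isBoundedUnder_le
  exact IsCoboundedUnder.of_frequently_ge (a := 0)
    (Eventually.of_forall fun k => h0 (k + 1)).frequently

/-- Neighborhood of optimality for CDSGD with fixed step size:
`limsup_{k→∞} E[V(X_k) − V*] ≤ α·γ̂·Q/(2·Ĥ·ζ₁)`. -/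
theorem cdsgd_fixed_step_neighborhood_of_optimality {N : ℕ} {Ω : Type*} {m0 : MeasurableSpace Ω}
    (P : Measure Ω) [IsProbabilityMeasure P] (ℱ : Filtration ℕ m0)
    (V : EuclideanSpace ℝ (Fin N) → ℝ) (Hh γh : ℝ)
    (hHh : 0 < Hh) (hHγ : Hh ≤ γh)
    (hdiff : Differentiable ℝ V)
    (hsc : ∀ x y : EuclideanSpace ℝ (Fin N),
      V y ≥ V x + ⟪gradient V x, y - x⟫ + (Hh / 2) * ‖y - x‖ ^ 2)
    (hLip : LipschitzWith γh.toNNReal (gradient V))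
    (xstar : EuclideanSpace ℝ (Fin N)) (hmin : ∀ x, V xstar ≤ V x)
    (x₁ : EuclideanSpace ℝ (Fin N))
    (X G : ℕ → Ω → EuclideanSpace ℝ (Fin N))
    (α ζ₁ Q Qm : ℝ) (hζ₁ : 0 < ζ₁) (hQ : 0 ≤ Q) (hQm : ζ₁ ^ 2 ≤ Qm)
    (hα : 0 < α) (hαle : α ≤ ζ₁ / (γh * Qm))
    (hX1 : ∀ᵐ ω ∂P, X 1 ω = x₁)
    (hXmeas : ∀ k, StronglyMeasurable[ℱ k] (X k))
    (hGmeas : ∀ k, StronglyMeasurable[ℱ (k + 1)] (G k))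
    (hGint : ∀ k, Integrable (fun ω => ‖G k ω‖ ^ 2) P)
    (hupdate : ∀ k, 1 ≤ k → ∀ ω, X (k + 1) ω = X k ω - α • G k ω)
    (hinner : ∀ k, 1 ≤ k → ∀ᵐ ω ∂P,
      ζ₁ * ‖gradient V (X k ω)‖ ^ 2 ≤ ⟪gradient V (X k ω), (P[G k|ℱ k]) ω⟫)
    (hsecond : ∀ k, 1 ≤ k → ∀ᵐ ω ∂P,
      (P[(fun ω' => ‖G k ω'‖ ^ 2)|ℱ k]) ω ≤ Q + Qm * ‖gradient V (X k ω)‖ ^ 2) :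
    Filter.limsup (fun k => ∫ ω, (V (X k ω) - V xstar) ∂P) atTop ≤
      α * γh * Q / (2 * Hh * ζ₁) := by
  have hγ : 0 < γh := lt_of_lt_of_le hHh hHγ
  have hQm0 : 0 < Qm := lt_of_lt_of_le (by positivity) hQm
  have hαγ : α * (γh * Qm) ≤ ζ₁ := (le_div_iff₀ (by positivity)).1 hαle
  have hgc : Continuous (gradient V) := hLip.continuous
  have hXs : ∀ k, AEStronglyMeasurable (X k) P := fun k =>
    ((hXmeas k).mono (ℱ.le k)).aestronglyMeasurable
  have hGs : ∀ k, AEStronglyMeasurable (G k) P := fun k =>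
    ((hGmeas k).mono (ℱ.le (k + 1))).aestronglyMeasurable
  have hG2 : ∀ k, MemLp (G k) 2 P := fun k =>
    (memLp_two_iff_integrable_sq_norm (hGs k)).2 (hGint k)
  have hX2 : ∀ k, 1 ≤ k → MemLp (X k) 2 P := by
    intro k hk
    induction k, hk using Nat.le_induction with
    | base =>
      exact (memLp_const x₁).ae_eq (by filter_upwards [hX1] with ω h using h.symm)
    | succ k hk ih =>
      have : X (k + 1) = X k - α • G k := by
        funext ω
        simpa using hupdate k hk ω
      rw [this]
      exact ih.sub ((hG2 k).const_smul α)
  have hgs : ∀ k, AEStronglyMeasurable (fun ω => gradient V (X k ω)) P := fun k =>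
    hgc.comp_aestronglyMeasurable (hXs k)
  have hg2 : ∀ k, 1 ≤ k → MemLp (fun ω => gradient V (X k ω)) 2 P := by
    intro k hk
    have h1 : MemLp (fun ω => gradient V (X k ω) - gradient V 0) 2 P := by
      refine (hX2 k hk).of_le_mul (c := γh) ((hgs k).sub aestronglyMeasurable_const) ?_
      refine Eventually.of_forall fun ω => ?_
      have := hLip.norm_sub_le (X k ω) 0
      rwa [Real.coe_toNNReal _ hγ.le, sub_zero] at this
    have h2 := h1.add (memLp_const (gradient V 0))
    refine h2.ae_eq (Eventually.of_forall fun ω => ?_)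
    simp
  have hgi : ∀ k, 1 ≤ k → Integrable (fun ω => ‖gradient V (X k ω)‖ ^ 2) P := fun k hk =>
    (memLp_two_iff_integrable_sq_norm (hgs k)).1 (hg2 k hk)
  have hVi : ∀ k, 1 ≤ k → Integrable (fun ω => V (X k ω) - V xstar) P := by
    intro k hk
    refine ((hgi k hk).const_mul (1 / (2 * Hh))).mono'
      ((hdiff.continuous.comp_aestronglyMeasurable (hXs k)).sub aestronglyMeasurable_const) ?_
    refine Eventually.of_forall fun ω => ?_
    have h1 := pl_aux V Hh hHh hsc (X k ω) xstar
    rw [Real.norm_of_nonneg (sub_nonneg.2 (hmin _)), one_div, ← div_eq_inv_mul,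
      le_div_iff₀ (by positivity)]
    linarith
  have hIi : ∀ k, 1 ≤ k → Integrable (fun ω => ⟪gradient V (X k ω), G k ω⟫) P := by
    intro k hk
    refine ((hgi k hk).add (hGint k)).mono' ((hgs k).inner (hGs k)) ?_
    refine Eventually.of_forall fun ω => ?_
    have := abs_real_inner_le_norm (gradient V (X k ω)) (G k ω)
    simp only [Real.norm_eq_abs, Pi.add_apply]
    nlinarith [sq_nonneg (‖gradient V (X k ω)‖ - ‖G k ω‖), sq_nonneg (‖gradient V (X k ω)‖),
      sq_nonneg (‖G k ω‖)]
  have hI : ∀ k, 1 ≤ k → ζ₁ * ∫ ω, ‖gradient V (X k ω)‖ ^ 2 ∂P ≤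
      ∫ ω, ⟪gradient V (X k ω), G k ω⟫ ∂P := by
    intro k hk
    have hpull := condExp_bilin_of_stronglyMeasurable_left (μ := P) (m := ℱ k)
      (innerSL ℝ : EuclideanSpace ℝ (Fin N) →L[ℝ] _)
      (hgc.comp_stronglyMeasurable (hXmeas k)) (hIi k hk)
      ((hG2 k).integrable one_le_two)
    rw [← integral_condExp (ℱ.le k) (f := fun ω => ⟪gradient V (X k ω), G k ω⟫),
      ← integral_const_mul]
    refine integral_mono_ae ((hgi k hk).const_mul _) integrable_condExp ?_
    filter_upwards [hpull, hinner k hk] with ω h1 h2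
    exact h2.trans_eq h1.symm
  have hS : ∀ k, 1 ≤ k → ∫ ω, ‖G k ω‖ ^ 2 ∂P ≤
      Q + Qm * ∫ ω, ‖gradient V (X k ω)‖ ^ 2 ∂P := by
    intro k hk
    have h1 : ∫ ω, (Q + Qm * ‖gradient V (X k ω)‖ ^ 2) ∂P =
        Q + Qm * ∫ ω, ‖gradient V (X k ω)‖ ^ 2 ∂P := by
      rw [integral_add (integrable_const _) ((hgi k hk).const_mul _), integral_const_mul]
      simp
    rw [← integral_condExp (ℱ.le k) (f := fun ω => ‖G k ω‖ ^ 2), ← h1]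
    exact integral_mono_ae integrable_condExp
      ((integrable_const _).add ((hgi k hk).const_mul _)) (hsecond k hk)
  have hstep : ∀ k, 1 ≤ k → ∫ ω, (V (X (k + 1) ω) - V xstar) ∂P ≤
      (∫ ω, (V (X k ω) - V xstar) ∂P) - α * (∫ ω, ⟪gradient V (X k ω), G k ω⟫ ∂P)
        + γh / 2 * α ^ 2 * ∫ ω, ‖G k ω‖ ^ 2 ∂P := by
    intro k hk
    rw [← integral_const_mul, ← integral_const_mul,
      ← integral_sub (hVi k hk) ((hIi k hk).const_mul _),
      ← integral_add (f := fun ω => V (X k ω) - V xstar - α * ⟪gradient V (X k ω), G k ω⟫)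
        ((hVi k hk).sub ((hIi k hk).const_mul _)) ((hGint k).const_mul _)]
    refine integral_mono (hVi (k + 1) (by omega))
      (((hVi k hk).sub ((hIi k hk).const_mul _)).add ((hGint k).const_mul _)) fun ω => ?_
    have h1 := descent_aux V γh hγ.le hdiff hLip (X k ω) (-(α • G k ω))
    rw [← sub_eq_add_neg, ← hupdate k hk ω, inner_neg_right, real_inner_smul_right, norm_neg,
      norm_smul, mul_pow, Real.norm_eq_abs, sq_abs] at h1
    simp only
    linarith
  have hPL : ∀ k, 1 ≤ k → 2 * Hh * (∫ ω, (V (X k ω) - V xstar) ∂P) ≤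
      ∫ ω, ‖gradient V (X k ω)‖ ^ 2 ∂P := by
    intro k hk
    rw [← integral_const_mul]
    exact integral_mono ((hVi k hk).const_mul _) (hgi k hk)
      fun ω => pl_aux V Hh hHh hsc (X k ω) xstar
  apply limsup_aux _ (1 - α * ζ₁ * Hh)
  · exact fun k => integral_nonneg fun ω => sub_nonneg.2 (hmin _)
  · have h1 : ζ₁ * (α * ζ₁ * Hh) ≤ ζ₁ * 1 := by
      calc ζ₁ * (α * ζ₁ * Hh) = α * (Hh * ζ₁ ^ 2) := by ring
        _ ≤ α * (γh * Qm) := by gcongr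
        _ ≤ ζ₁ * 1 := by linarith
    linarith [le_of_mul_le_mul_left h1 hζ₁]
  · have : 0 < α * ζ₁ * Hh := by positivity
    linarith
  · intro k hk
    have hC : α * ζ₁ * Hh * (α * γh * Q / (2 * Hh * ζ₁)) = γh / 2 * α ^ 2 * Q := by
      field_simp
    have h1 := hstep k hk
    have h2 := mul_le_mul_of_nonneg_left (hI k hk) hα.le
    have h3 := mul_le_mul_of_nonneg_left (hS k hk)
      (by positivity : 0 ≤ γh / 2 * α ^ 2)
    have h4 := mul_le_mul_of_nonneg_left (hPL k hk)
      (by positivity : 0 ≤ α * ζ₁ / 2)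
    have hg0 : 0 ≤ ∫ ω, ‖gradient V (X k ω)‖ ^ 2 ∂P := integral_nonneg fun ω => by positivity
    have h5 := mul_le_mul_of_nonneg_left hαγ
      (mul_nonneg (by positivity : 0 ≤ α / 2) hg0)
    linarith
end

section
/- (Proposition 1: consensus with fixed step size.) Let Π be a real symmetric N×N doubly stochastic matrix (Π1 = 1, nonnegative entries) with I ⪰ Π ≻ 0 and with eigenvalues 1 = λ₁(Π) > λ₂(Π) ≥ … ≥ λ_N(Π) > 0. Let (Ω, ℱ, P) be a probability space, let α > 0, L > 0, let the initial iterate x₁ ∈ ℝ^N be a constant multiple of the all-ones vector (identical initialization across agents), and let (X_k), (G_k) be random vectors in ℝ^N with X₁ = x₁ almost surely, E[‖G_k‖] ≤ L for all k, and X_{k+1} = Π·X_k − α·G_k. Let S_k := (1/N)·Σ_{j=1}^{N} X_k^j denote the average of the coordinates of X_k. Then for every agent j and every k ≥ 1, E[|X_k^j − S_k|] ≤ α·L/(1 − λ₂(Π)). -/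
open MeasureTheory Filter
open scoped RealInnerProductSpace BigOperators

/-- The eigenvalues of a hermitian (real symmetric) matrix, sorted in increasing order;
`eigAsc A hA ⟨N-1,_⟩` is the largest eigenvalue `λ₁`, `eigAsc A hA ⟨N-2,_⟩` is the second
largest `λ₂`, and `eigAsc A hA ⟨0,_⟩` is the smallest eigenvalue `λ_N`. -/
noncomputable def eigAsc {N : ℕ} (A : Matrix (Fin N) (Fin N) ℝ) (hA : A.IsHermitian) :
    Fin N → ℝ :=
  hA.eigenvalues ∘ Tuple.sort hA.eigenvalues

lemma eig_contract {N : ℕ} (hN : 2 ≤ N)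
    (Pi : Matrix (Fin N) (Fin N) ℝ) (hsymm : Pi.IsHermitian)
    (p q r : Fin N) (hp : p.val = N - 1) (hq : q.val = N - 2) (hr : r.val = 0)
    (hlam2 : eigAsc Pi hsymm q < 1)
    (hlamN : 0 < eigAsc Pi hsymm r)
    (u : EuclideanSpace ℝ (Fin N)) (hu : Matrix.toEuclideanLin Pi u = u) (hu0 : u ≠ 0)
    (y : EuclideanSpace ℝ (Fin N)) (hy : ⟪u, y⟫ = 0) :
    ‖Matrix.toEuclideanLin Pi y‖ ≤ eigAsc Pi hsymm q * ‖y‖ := by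
  set lam := eigAsc Pi hsymm q with hlam
  have hmono : Monotone (eigAsc Pi hsymm) := Tuple.monotone_sort _
  have hlam0 : 0 < lam := lt_of_lt_of_le hlamN (hmono (by simp [Fin.le_def, hr]))
  set σ := Tuple.sort hsymm.eigenvalues with hσ
  set i0 := σ p with hi0
  have hev : ∀ i, i ≠ i0 → 0 < hsymm.eigenvalues i ∧ hsymm.eigenvalues i ≤ lam := by
    intro i hi
    obtain ⟨t, rfl⟩ := σ.surjective i
    have ht : t ≠ p := fun h => hi (by rw [h])
    have ht' : t.val ≠ N - 1 := fun h => ht (Fin.ext (h.trans hp.symm))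
    have h1 := t.isLt
    constructor
    · exact lt_of_lt_of_le hlamN (hmono (show r ≤ t by simp [Fin.le_def, hr]))
    · exact hmono (show t ≤ q by rw [Fin.le_def]; omega)
  set b := hsymm.eigenvectorBasis with hb
  have hTb : ∀ i, Matrix.toEuclideanLin Pi (b i) = hsymm.eigenvalues i • b i := by
    intro i
    ext j
    have := congrFun (hsymm.mulVec_eigenvectorBasis i) j
    simpa [Matrix.toLpLin_apply] using this
  have hsa : (Matrix.toEuclideanLin Pi).IsSymmetric :=
    Matrix.isSymmetric_toEuclideanLin_iff.mpr hsymm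
  have hcoef : ∀ i v, ⟪b i, Matrix.toEuclideanLin Pi v⟫ = hsymm.eigenvalues i * ⟪b i, v⟫ := by
    intro i v
    rw [← hsa (b i) v, hTb, real_inner_smul_left]
  have hub : ∀ i, i ≠ i0 → ⟪b i, u⟫ = 0 := by
    intro i hi
    have h := hcoef i u
    rw [hu] at h
    have h2 := (hev i hi).2
    have h3 : (1 - hsymm.eigenvalues i) * ⟪b i, u⟫ = 0 := by linarith
    rcases mul_eq_zero.mp h3 with h | h
    · linarith
    · exact h
  have hsum : u = ⟪b i0, u⟫ • b i0 := by
    conv_lhs => rw [← b.sum_repr' u]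
    exact Finset.sum_eq_single i0 (fun i _ hi => by rw [hub i hi, zero_smul]) (by simp)
  have hy0 : ⟪b i0, y⟫ = 0 := by
    rw [hsum, real_inner_smul_left] at hy
    rcases mul_eq_zero.mp hy with h | h
    · rw [h, zero_smul] at hsum
      exact absurd hsum hu0
    · exact h
  apply le_of_sq_le_sq _ (by positivity)
  rw [mul_pow, ← b.sum_sq_norm_inner_right, ← b.sum_sq_norm_inner_right y, Finset.mul_sum]
  apply Finset.sum_le_sum
  intro i _
  rw [hcoef]
  by_cases hi : i = i0
  · rw [hi, hy0]; simp
  · rw [norm_mul, mul_pow]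
    obtain ⟨h1, h2⟩ := hev i hi
    rw [Real.norm_of_nonneg h1.le]
    gcongr

/-- projection off the consensus line -/
noncomputable def devi {N : ℕ} (v : EuclideanSpace ℝ (Fin N)) : EuclideanSpace ℝ (Fin N) :=
  WithLp.toLp 2 (fun j => v j - (1 / (N : ℝ)) * ∑ i, v i)

lemma sum_devi {N : ℕ} (hN : 2 ≤ N) (v : EuclideanSpace ℝ (Fin N)) : ∑ j, devi v j = 0 := by
  have : (N : ℝ) ≠ 0 := by positivity
  simp only [devi, Finset.sum_sub_distrib, Finset.sum_const, Finset.card_univ, Fintype.card_fin,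
    nsmul_eq_mul]
  field_simp
  ring

lemma norm_devi_le {N : ℕ} (hN : 2 ≤ N) (v : EuclideanSpace ℝ (Fin N)) : ‖devi v‖ ≤ ‖v‖ := by
  apply le_of_sq_le_sq _ (norm_nonneg _)
  rw [EuclideanSpace.real_norm_sq_eq, EuclideanSpace.real_norm_sq_eq]
  set s := (1 / (N : ℝ)) * ∑ i, v i with hs
  have h : ∀ j, v j ^ 2 = devi v j ^ 2 + (2 * s) * devi v j + s ^ 2 := by
    intro j
    simp only [devi, ← hs]
    ring
  rw [Finset.sum_congr rfl (fun j _ => h j), Finset.sum_add_distrib, Finset.sum_add_distrib,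
    ← Finset.mul_sum, sum_devi hN]
  have : 0 ≤ ∑ j : Fin N, s ^ 2 := Finset.sum_nonneg (fun _ _ => sq_nonneg _)
  linarith

lemma devi_update {N : ℕ} (Pi : Matrix (Fin N) (Fin N) ℝ) (hsymm : Pi.IsHermitian)
    (hstoch : Pi.mulVec (fun _ => 1) = fun _ => 1) (α : ℝ) (x g : EuclideanSpace ℝ (Fin N)) :
    devi (Matrix.toEuclideanLin Pi x - α • g) =
      Matrix.toEuclideanLin Pi (devi x) - α • devi g := by
  have hrow : ∀ j, ∑ i, Pi j i = 1 := by
    intro j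
    have := congrFun hstoch j
    simpa [Matrix.mulVec, dotProduct] using this
  have hcol : ∀ j, ∑ i, Pi i j = 1 := by
    intro j
    rw [← hrow j]
    refine Finset.sum_congr rfl fun i _ => ?_
    simpa using hsymm.apply j i
  have hs : ∑ i, ∑ l, Pi i l * x l = ∑ l, x l := by
    rw [Finset.sum_comm]
    refine Finset.sum_congr rfl fun l _ => ?_
    rw [← Finset.sum_mul, hcol, one_mul]
  ext j
  simp only [devi, Matrix.toLpLin_apply, Matrix.mulVec, dotProduct, PiLp.sub_apply,
    PiLp.smul_apply, smul_eq_mul, Finset.sum_sub_distrib, mul_sub, ← Finset.mul_sum, hs]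
  rw [← Finset.sum_mul, hrow]
  ring

/-- Proposition 1 (consensus with fixed step size): along the CDSGD iterates
`X_{k+1} = Π·X_k − α·G_k` with `E[‖G_k‖] ≤ L` and identical initialization, each agent's
estimate stays within `α·L/(1 − λ₂(Π))` of the average, in expectation. -/
theorem cdsgd_consensus_fixed_step {N : ℕ} (hN : 2 ≤ N) {Ω : Type*}
    {m0 : MeasurableSpace Ω} (P : Measure Ω) [IsProbabilityMeasure P]
    (Pi : Matrix (Fin N) (Fin N) ℝ) (hsymm : Pi.IsHermitian)
    (hnonneg : ∀ i j, 0 ≤ Pi i j)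
    (hstoch : Pi.mulVec (fun _ => 1) = fun _ => 1)
    (hpsd : (1 - Pi).PosSemidef) (hpd : Pi.PosDef)
    (hlam1 : eigAsc Pi hsymm ⟨N - 1, by omega⟩ = 1)
    (hlam2 : eigAsc Pi hsymm ⟨N - 2, by omega⟩ < 1)
    (hlamN : 0 < eigAsc Pi hsymm ⟨0, by omega⟩)
    (α L : ℝ) (hα : 0 < α) (hL : 0 < L)
    (c : ℝ) (x₁ : EuclideanSpace ℝ (Fin N)) (hx₁ : ∀ j, x₁ j = c)
    (X G : ℕ → Ω → EuclideanSpace ℝ (Fin N))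
    (hX1 : ∀ᵐ ω ∂P, X 1 ω = x₁)
    (hGmeas : ∀ k, AEStronglyMeasurable (G k) P)
    (hGint : ∀ k, Integrable (fun ω => ‖G k ω‖) P)
    (hGbound : ∀ k, (∫ ω, ‖G k ω‖ ∂P) ≤ L)
    (hupdate : ∀ k, 1 ≤ k → ∀ ω,
      X (k + 1) ω = (Matrix.toEuclideanLin Pi) (X k ω) - α • G k ω) :
    ∀ (j : Fin N) (k : ℕ), 1 ≤ k →
      (∫ ω, |X k ω j - (1 / (N : ℝ)) * ∑ i, X k ω i| ∂P) ≤
        α * L / (1 - eigAsc Pi hsymm ⟨N - 2, by omega⟩) := by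
  have hmono : Monotone (eigAsc Pi hsymm) := Tuple.monotone_sort _
  have hlam0 : 0 < eigAsc Pi hsymm ⟨N - 2, by omega⟩ :=
    lt_of_lt_of_le hlamN (hmono (by simp [Fin.le_def]))
  have hcontr : ∀ v, ‖Matrix.toEuclideanLin Pi (devi v)‖ ≤
      eigAsc Pi hsymm ⟨N - 2, by omega⟩ * ‖devi v‖ := by
    intro v
    refine eig_contract hN Pi hsymm _ _ _ (show (⟨N - 1, by omega⟩ : Fin N).val = N - 1 from rfl) rfl rfl hlam2 hlamN (WithLp.toLp 2 (fun _ => 1)) ?_ ?_ _ ?_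
    · ext j
      have := congrFun hstoch j
      simpa [Matrix.toLpLin_apply] using this
    · intro h
      have := congrArg (fun w : EuclideanSpace ℝ (Fin N) => w ⟨0, by omega⟩) h
      simp at this
    · have := sum_devi hN v
      simpa [PiLp.inner_apply] using this
  generalize eigAsc Pi hsymm ⟨N - 2, by omega⟩ = lam at *
  have key : ∀ k, ∃ B : Ω → ℝ, Integrable B P ∧ (∀ᵐ ω ∂P, ‖devi (X (k + 1) ω)‖ ≤ B ω) ∧
      ∫ ω, B ω ∂P ≤ α * L / (1 - lam) := by
    have h1 : 0 < 1 - lam := by linarith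
    intro k
    induction k with
    | zero =>
      refine ⟨fun _ => 0, integrable_zero _ _ _, ?_, ?_⟩
      · filter_upwards [hX1] with ω hω
        have : devi x₁ = 0 := by
          have hN0 : (N : ℝ) ≠ 0 := by positivity
          ext j
          simp [devi, hx₁, hN0]
        simp [hω, this]
      · simp only [integral_zero]
        positivity
    | succ k ih =>
      obtain ⟨B, hBi, hB, hBL⟩ := ih
      refine ⟨fun ω => lam * B ω + α * ‖G (k + 1) ω‖,
        (hBi.const_mul _).add ((hGint _).const_mul _), ?_, ?_⟩
      · filter_upwards [hB] with ω hω
        rw [hupdate (k + 1) (by omega), devi_update Pi hsymm hstoch]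
        refine (norm_sub_le _ _).trans ?_
        rw [norm_smul, Real.norm_of_nonneg hα.le]
        have := norm_devi_le hN (G (k + 1) ω)
        have := hcontr (X (k + 1) ω)
        gcongr
        exact this.trans (by gcongr)
      · rw [integral_add (hBi.const_mul _) ((hGint _).const_mul _), integral_const_mul,
          integral_const_mul]
        calc _ ≤ lam * (α * L / (1 - lam)) + α * L := by
              have := hGbound (k + 1)
              gcongr
          _ = _ := by field_simp; ring
  intro j k hk
  obtain ⟨k, rfl⟩ : ∃ l, k = l + 1 := ⟨k - 1, by omega⟩
  obtain ⟨B, hBi, hB, hBL⟩ := key k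
  refine (integral_mono_of_nonneg (ae_of_all _ fun _ => abs_nonneg _) hBi ?_).trans hBL
  filter_upwards [hB] with ω hω
  exact (PiLp.norm_apply_le (devi (X (k + 1) ω)) j).trans hω
end

section
/- (Proposition 2: consensus with diminishing step size.) Let Π be a real symmetric N×N doubly stochastic matrix (Π1 = 1, nonnegative entries) with I ⪰ Π ≻ 0 and with eigenvalues 1 = λ₁(Π) > λ₂(Π) ≥ … ≥ λ_N(Π) > 0. Let (Ω, ℱ, P) be a probability space, let (α_k)_{k≥1} be a positive sequence with Σ_{k} α_k = ∞ and Σ_{k} α_k² < ∞, let L > 0, let the initial iterate x₁ ∈ ℝ^N be a constant multiple of the all-ones vector, and let (X_k), (G_k) be random vectors in ℝ^N with X₁ = x₁ almost surely, E[‖G_k‖] ≤ L for all k, and X_{k+1} = Π·X_k − α_k·G_k. Let S_k := (1/N)·Σ_{j=1}^{N} X_k^j. Then for every agent j, lim_{k→∞} E[|X_k^j − S_k|] = 0. -/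
open MeasureTheory Filter
open scoped RealInnerProductSpace BigOperators

theorem aux_lim (lam : ℝ) (h0 : 0 ≤ lam) (h1 : lam < 1) (a b : ℕ → ℝ) (ha : ∀ k, 0 ≤ a k)
    (hb : Tendsto b atTop (nhds 0)) (h : ∀ k, 1 ≤ k → a (k + 1) ≤ lam * a k + b k) :
    Tendsto a atTop (nhds 0) := by
  rw [Metric.tendsto_atTop]
  intro ε hε
  have hpos : 0 < (1 - lam) * (ε / 2) := by
    have : 0 < 1 - lam := by linarith
    positivity
  obtain ⟨K, hK⟩ := eventually_atTop.1 ((hb.eventually (gt_mem_nhds hpos)).and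
    (eventually_ge_atTop 1))
  have key : ∀ n, a (K + n) ≤ ε / 2 + lam ^ n * a K := by
    intro n
    induction n with
    | zero => simp; linarith
    | succ n ih =>
      obtain ⟨p, q⟩ := hK (K + n) (by omega)
      have := h (K + n) q
      have h2 := mul_le_mul_of_nonneg_left ih h0
      rw [← add_assoc, pow_succ]
      nlinarith
  have ht : Tendsto (fun n => lam ^ n * a K) atTop (nhds 0) := by
    simpa using (tendsto_pow_atTop_nhds_zero_of_lt_one h0 h1).mul_const (a K)
  obtain ⟨M, hM⟩ := eventually_atTop.1 (ht.eventually (gt_mem_nhds (half_pos hε)))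
  refine ⟨K + M, fun n hn => ?_⟩
  have h3 := key (n - K)
  have h4 := hM (n - K) (by omega)
  rw [show K + (n - K) = n by omega] at h3
  rw [Real.dist_eq, sub_zero, abs_of_nonneg (ha n)]
  linarith

theorem aux_apply {N : ℕ} (A : Matrix (Fin N) (Fin N) ℝ) (hA : A.IsHermitian) (i : Fin N)
    (x : EuclideanSpace ℝ (Fin N)) :
    ⟪hA.eigenvectorBasis i, Matrix.toEuclideanLin A x⟫
      = hA.eigenvalues i * ⟪hA.eigenvectorBasis i, x⟫ := by
  have hs := (Matrix.isSymmetric_toEuclideanLin_iff).2 hA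
  rw [← hs]
  have : Matrix.toEuclideanLin A (hA.eigenvectorBasis i)
      = hA.eigenvalues i • hA.eigenvectorBasis i := by
    have := hA.mulVec_eigenvectorBasis i
    ext j
    simpa using congrFun this j
  rw [this, real_inner_smul_left]

theorem aux_contr {N : ℕ} (hN : 2 ≤ N) (A : Matrix (Fin N) (Fin N) ℝ) (hA : A.IsHermitian)
    (hpd : A.PosDef) (one : EuclideanSpace ℝ (Fin N)) (hone : one ≠ 0)
    (hT : Matrix.toEuclideanLin A one = one)
    (p : Fin N) (hp : (p : ℕ) = N - 2) (hlam2 : eigAsc A hA p < 1) :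
    ∃ lam : ℝ, 0 ≤ lam ∧ lam < 1 ∧ ∀ x : EuclideanSpace ℝ (Fin N), ⟪one, x⟫ = 0 →
      ‖Matrix.toEuclideanLin A x‖ ≤ lam * ‖x‖ := by
  have hl0 : 0 ≤ eigAsc A hA p := (hpd.eigenvalues_pos _).le
  refine ⟨eigAsc A hA p, hl0, hlam2, fun x hx => ?_⟩
  set lam := eigAsc A hA p with hlam
  set i0 : Fin N := Tuple.sort hA.eigenvalues ⟨N - 1, by omega⟩ with hi0
  have hle : ∀ i, i ≠ i0 → hA.eigenvalues i ≤ lam := by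
    intro i hi
    obtain ⟨j, rfl⟩ := (Tuple.sort hA.eigenvalues).surjective i
    have hj : j ≤ p := by
      have : j ≠ ⟨N - 1, by omega⟩ := fun h => hi (by rw [h])
      have h2 : (j : ℕ) ≠ N - 1 := fun h => this (Fin.ext h)
      have := j.2
      rw [Fin.le_def]
      rw [hp]
      omega
    exact Tuple.monotone_sort hA.eigenvalues hj
  have horth : ∀ i, i ≠ i0 → ⟪hA.eigenvectorBasis i, one⟫ = 0 := by
    intro i hi
    have h := aux_apply A hA i one
    rw [hT] at h
    have := hle i hi
    have h2 : (1 - hA.eigenvalues i) * ⟪hA.eigenvectorBasis i, one⟫ = 0 := by linarith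
    rcases mul_eq_zero.1 h2 with h3 | h3
    · linarith
    · exact h3
  have hone' : one = ⟪hA.eigenvectorBasis i0, one⟫ • hA.eigenvectorBasis i0 := by
    conv_lhs => rw [← hA.eigenvectorBasis.sum_repr' one]
    exact Finset.sum_eq_single i0 (fun i _ hi => by rw [horth i hi, zero_smul]) (by simp)
  have hx0 : ⟪hA.eigenvectorBasis i0, x⟫ = 0 := by
    rw [hone', real_inner_smul_left] at hx
    rcases mul_eq_zero.1 hx with h3 | h3
    · exact absurd (by rw [hone', h3, zero_smul]) hone
    · exact h3
  have hsq : ‖Matrix.toEuclideanLin A x‖ ^ 2 ≤ (lam * ‖x‖) ^ 2 := by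
    rw [mul_pow, ← hA.eigenvectorBasis.sum_sq_norm_inner_right,
      ← hA.eigenvectorBasis.sum_sq_norm_inner_right x, Finset.mul_sum]
    refine Finset.sum_le_sum fun i _ => ?_
    rw [aux_apply]
    by_cases hi : i = i0
    · rw [hi, hx0]; simp
    · rw [norm_mul, mul_pow]
      refine mul_le_mul_of_nonneg_right ?_ (sq_nonneg _)
      have h0 := hpd.eigenvalues_pos i
      rw [Real.norm_of_nonneg h0.le]
      exact pow_le_pow_left₀ h0.le (hle i hi) 2
  exact le_of_sq_le_sq hsq (by positivity)

theorem aux_Q {N : ℕ} (hN : 2 ≤ N) (A : Matrix (Fin N) (Fin N) ℝ) (hA : A.IsHermitian)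
    (hstoch : A.mulVec (fun _ => 1) = fun _ => 1) (hpd : A.PosDef)
    (p : Fin N) (hp : (p : ℕ) = N - 2) (hlam2 : eigAsc A hA p < 1) :
    ∃ (lam : ℝ) (Q : EuclideanSpace ℝ (Fin N) →L[ℝ] EuclideanSpace ℝ (Fin N)),
      0 ≤ lam ∧ lam < 1 ∧
      (∀ x j, Q x j = x j - (1 / (N : ℝ)) * ∑ i, x i) ∧
      (∀ x, Q (Matrix.toEuclideanLin A x) = Matrix.toEuclideanLin A (Q x)) ∧
      ∀ x, ‖Matrix.toEuclideanLin A (Q x)‖ ≤ lam * ‖Q x‖ := by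
  have hN0 : (N : ℝ) ≠ 0 := by
    have : N ≠ 0 := by omega
    exact_mod_cast this
  let one : EuclideanSpace ℝ (Fin N) := WithLp.toLp 2 (fun _ => 1)
  have hT : Matrix.toEuclideanLin A one = one := by
    ext j
    simpa [one] using congrFun hstoch j
  have hone : one ≠ 0 := fun h => by
    have := congrArg (fun v : EuclideanSpace ℝ (Fin N) => v ⟨0, by omega⟩) h
    simp [one] at this
  have hin : ∀ x : EuclideanSpace ℝ (Fin N), ⟪one, x⟫ = ∑ i, x i := by
    intro x
    simp [one, PiLp.inner_apply]
  obtain ⟨lam, h0, h1, hc⟩ := aux_contr hN A hA hpd one hone hT p hp hlam2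
  let Q : EuclideanSpace ℝ (Fin N) →L[ℝ] EuclideanSpace ℝ (Fin N) :=
    ContinuousLinearMap.id ℝ _ - ((1 / (N : ℝ)) • innerSL ℝ one).smulRight one
  have hQ : ∀ x, Q x = x - ((1 / (N : ℝ)) * ⟪one, x⟫) • one := fun x => by
    simp [Q]
  have hs := (Matrix.isSymmetric_toEuclideanLin_iff).2 hA
  refine ⟨lam, Q, h0, h1, fun x j => ?_, fun x => ?_, fun x => hc _ ?_⟩
  · rw [hQ, hin]; simp [one]
  · rw [hQ, hQ, map_sub, map_smul, hT, ← hs, hT]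
  · rw [hQ, inner_sub_right, inner_smul_right, hin one]
    simp [one]
    field_simp
    simp

/-- Proposition 2 (consensus with diminishing step size): along the CDSGD iterates
`X_{k+1} = Π·X_k − α_k·G_k` with `E[‖G_k‖] ≤ L`, diminishing steps (`Σα_k = ∞`, `Σα_k² < ∞`)
and identical initialization, `E[|X_k^j − S_k|] → 0` for every agent `j`. -/
theorem cdsgd_consensus_diminishing_step {N : ℕ} (hN : 2 ≤ N) {Ω : Type*}
    {m0 : MeasurableSpace Ω} (P : Measure Ω) [IsProbabilityMeasure P]
    (Pi : Matrix (Fin N) (Fin N) ℝ) (hsymm : Pi.IsHermitian)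
    (hnonneg : ∀ i j, 0 ≤ Pi i j)
    (hstoch : Pi.mulVec (fun _ => 1) = fun _ => 1)
    (hpsd : (1 - Pi).PosSemidef) (hpd : Pi.PosDef)
    (hlam1 : eigAsc Pi hsymm ⟨N - 1, by omega⟩ = 1)
    (hlam2 : eigAsc Pi hsymm ⟨N - 2, by omega⟩ < 1)
    (hlamN : 0 < eigAsc Pi hsymm ⟨0, by omega⟩)
    (α : ℕ → ℝ) (hαpos : ∀ k, 1 ≤ k → 0 < α k)
    (hαdiv : ¬ Summable (fun k => α k))
    (hαsq : Summable (fun k => (α k) ^ 2))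
    (L : ℝ) (hL : 0 < L)
    (c : ℝ) (x₁ : EuclideanSpace ℝ (Fin N)) (hx₁ : ∀ j, x₁ j = c)
    (X G : ℕ → Ω → EuclideanSpace ℝ (Fin N))
    (hX1 : ∀ᵐ ω ∂P, X 1 ω = x₁)
    (hGmeas : ∀ k, AEStronglyMeasurable (G k) P)
    (hGint : ∀ k, Integrable (fun ω => ‖G k ω‖) P)
    (hGbound : ∀ k, (∫ ω, ‖G k ω‖ ∂P) ≤ L)
    (hupdate : ∀ k, 1 ≤ k → ∀ ω,
      X (k + 1) ω = (Matrix.toEuclideanLin Pi) (X k ω) - α k • G k ω) :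
    ∀ j : Fin N,
      Tendsto (fun k : ℕ => ∫ ω, |X k ω j - (1 / (N : ℝ)) * ∑ i, X k ω i| ∂P)
        atTop (nhds 0) := by
  intro j
  obtain ⟨lam, Q, h0, h1, hQ, hcomm, hc⟩ := aux_Q hN Pi hsymm hstoch hpd _ rfl hlam2
  have hGi : ∀ k, Integrable (G k) P := fun k => (integrable_norm_iff (hGmeas k)).1 (hGint k)
  have hrec : ∀ k, 1 ≤ k → ∀ ω, Q (X (k + 1) ω) =
      Matrix.toEuclideanLin Pi (Q (X k ω)) - α k • Q (G k ω) := by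
    intro k hk ω
    rw [hupdate k hk, map_sub, map_smul, hcomm]
  have hN0 : (N : ℝ) ≠ 0 := by
    have : N ≠ 0 := by omega
    exact_mod_cast this
  have hint : ∀ k, 1 ≤ k → Integrable (fun ω => Q (X k ω)) P := by
    intro k hk
    induction k, hk using Nat.le_induction with
    | base =>
      refine (integrable_const (Q x₁)).congr ?_
      filter_upwards [hX1] with ω hω
      rw [hω]
    | succ k hk ih =>
      have e : (fun ω => Q (X (k + 1) ω)) = fun ω =>
          (Matrix.toEuclideanLin Pi).toContinuousLinearMap (Q (X k ω)) - α k • Q (G k ω) := by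
        funext ω
        rw [hrec k hk]; rfl
      rw [e]
      exact (ContinuousLinearMap.integrable_comp _ ih).sub
        ((Q.integrable_comp (hGi k)).smul (α k))
  have hα0 : Tendsto α atTop (nhds 0) := by
    have := hαsq.tendsto_atTop_zero
    have h2 := this.sqrt
    simp only [Real.sqrt_sq_eq_abs, Real.sqrt_zero] at h2
    exact (tendsto_zero_iff_abs_tendsto_zero _).2 h2
  have hlim : Tendsto (fun k => ∫ ω, ‖Q (X k ω)‖ ∂P) atTop (nhds 0) := by
    refine aux_lim lam h0 h1 _ (fun k => α k * (‖Q‖ * L))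
      (fun k => integral_nonneg fun ω => norm_nonneg _) (by simpa using hα0.mul_const _) ?_
    intro k hk
    have hi1 : Integrable (fun ω => lam * ‖Q (X k ω)‖) P := (hint k hk).norm.const_mul _
    have hi2 : Integrable (fun ω => α k * (‖Q‖ * ‖G k ω‖)) P :=
      ((hGint k).const_mul _).const_mul _
    calc ∫ ω, ‖Q (X (k + 1) ω)‖ ∂P
        ≤ ∫ ω, (lam * ‖Q (X k ω)‖ + α k * (‖Q‖ * ‖G k ω‖)) ∂P := by
          refine integral_mono (hint (k + 1) (by omega)).norm (hi1.add hi2) fun ω => ?_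
          show ‖Q (X (k + 1) ω)‖ ≤ lam * ‖Q (X k ω)‖ + α k * (‖Q‖ * ‖G k ω‖)
          rw [hrec k hk]
          refine (norm_sub_le _ _).trans (add_le_add (hc _) ?_)
          rw [norm_smul, Real.norm_of_nonneg (hαpos k hk).le]
          exact mul_le_mul_of_nonneg_left (Q.le_opNorm _) (hαpos k hk).le
      _ = lam * ∫ ω, ‖Q (X k ω)‖ ∂P + α k * (‖Q‖ * ∫ ω, ‖G k ω‖ ∂P) := by
          rw [integral_add hi1 hi2, integral_const_mul, integral_const_mul, integral_const_mul]
      _ ≤ _ := by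
          have := mul_le_mul_of_nonneg_left
            (mul_le_mul_of_nonneg_left (hGbound k) (norm_nonneg Q)) (hαpos k hk).le
          linarith
  refine squeeze_zero' (Eventually.of_forall fun k => integral_nonneg fun ω => abs_nonneg _)
    ?_ hlim
  filter_upwards [eventually_ge_atTop 1] with k hk
  have hle : ∀ ω, |X k ω j - (1 / (N : ℝ)) * ∑ i, X k ω i| ≤ ‖Q (X k ω)‖ := fun ω => by
    rw [← hQ, ← Real.norm_eq_abs]
    exact PiLp.norm_apply_le _ _
  exact integral_mono_of_nonneg (Eventually.of_forall fun ω => abs_nonneg _)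
    (hint k hk).norm (Eventually.of_forall hle)
end

section
/- (Lemma 8.) Let Π be a real symmetric N×N doubly stochastic matrix with I ⪰ Π ≻ 0 and second largest eigenvalue λ₂(Π) < 1. Let (Ω, ℱ, P) be a probability space, let (α_k)_{k≥1} be a positive nonincreasing sequence with Σ_{k=1}^{∞} α_k² < ∞, let L > 0, and let (X_k), (G_k) be random vectors in ℝ^N with X₁ = 0 almost surely, E[‖G_k‖] ≤ L for all k, and X_{k+1} = Π·X_k − α_k·G_k. Then Σ_{k=2}^{∞} α_k·E[‖(I − Π)·X_k‖] < ∞. -/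
open MeasureTheory Filter
open scoped RealInnerProductSpace BigOperators

lemma aux_contract {N : ℕ} (hN : 2 ≤ N) (A : Matrix (Fin N) (Fin N) ℝ) (hA : A.IsHermitian)
    (hpsd : (1 - A).PosSemidef) (hpd : A.PosDef) :
    ∃ ρ : ℝ, 0 ≤ ρ ∧ ρ < 1 ∧ ∀ x : EuclideanSpace ℝ (Fin N),
      ‖Matrix.toEuclideanLin A (Matrix.toEuclideanLin (1 - A) x)‖
        ≤ ρ * ‖Matrix.toEuclideanLin (1 - A) x‖ := by
  have : Nonempty (Fin N) := ⟨⟨0, by omega⟩⟩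
  set b := hA.eigenvectorBasis with hb
  set lam := hA.eigenvalues with hlam
  have hpos : ∀ i, 0 < lam i := fun i => hpd.eigenvalues_pos i
  have hTb : ∀ i, Matrix.toEuclideanLin A (b i) = lam i • b i := by
    intro i
    have := hA.mulVec_eigenvectorBasis i
    ext j
    have h2 := congrFun this j
    simpa [Matrix.toEuclideanLin, Matrix.toLpLin_apply] using h2
  have hsub : ∀ x, Matrix.toEuclideanLin (1 - A) x = x - Matrix.toEuclideanLin A x := by
    intro x
    simp [map_sub, Matrix.toEuclideanLin]
  have hsym : ∀ x y : EuclideanSpace ℝ (Fin N), inner ℝ (Matrix.toEuclideanLin A x) y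
      = inner ℝ x (Matrix.toEuclideanLin A y) :=
    Matrix.isSymmetric_toEuclideanLin_iff.mpr hA
  have hcoord : ∀ i x, inner ℝ (b i) (Matrix.toEuclideanLin A x) = lam i * inner ℝ (b i) x := by
    intro i x
    rw [← hsym, hTb, real_inner_smul_left]
  have hle : ∀ i, lam i ≤ 1 := by
    intro i
    have h := Matrix.isPositive_toEuclideanLin_iff.mpr hpsd
    have h1 := h.re_inner_nonneg_right (b i)
    rw [hsub, hTb, inner_sub_right, real_inner_smul_right, real_inner_self_eq_norm_sq,
      b.norm_eq_one] at h1
    simp at h1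
    linarith
  obtain ⟨i0, -, hi0⟩ := Finset.exists_max_image Finset.univ
    (fun i => if lam i < 1 then lam i else 0) Finset.univ_nonempty
  refine ⟨if lam i0 < 1 then lam i0 else 0, ?_, ?_, ?_⟩
  · split_ifs
    · exact (hpos i0).le
    · exact le_rfl
  · split_ifs with h
    · exact h
    · exact one_pos
  · intro x
    set ρ := (if lam i0 < 1 then lam i0 else 0) with hρ
    have hρ0 : 0 ≤ ρ := by
      rw [hρ]; split_ifs
      · exact (hpos i0).le
      · exact le_rfl
    have key : ‖Matrix.toEuclideanLin A (Matrix.toEuclideanLin (1 - A) x)‖ ^ 2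
        ≤ (ρ * ‖Matrix.toEuclideanLin (1 - A) x‖) ^ 2 := by
      rw [mul_pow, ← b.sum_sq_norm_inner_right, ← b.sum_sq_norm_inner_right, Finset.mul_sum]
      refine Finset.sum_le_sum fun i _ => ?_
      rw [hcoord, norm_mul, mul_pow]
      by_cases h : lam i < 1
      · have h2 := hi0 i (Finset.mem_univ i)
        simp only [h, if_true] at h2
        have h3 : ‖lam i‖ ≤ ρ := by
          rw [Real.norm_of_nonneg (hpos i).le]; exact h2
        gcongr
      · have h1 : lam i = 1 := le_antisymm (hle i) (not_lt.mp h)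
        have h0 : inner ℝ (b i) (Matrix.toEuclideanLin (1 - A) x) = 0 := by
          rw [hsub, inner_sub_right, hcoord, h1]; ring
        rw [h0]; simp
    exact le_of_sq_le_sq key (by positivity)

lemma aux_summable (a c : ℕ → ℝ) (ρ : ℝ) (hρ1 : ρ < 1) (hρ0 : 0 ≤ ρ) (ha : ∀ k, 0 ≤ a k)
    (hc0 : ∀ k, 0 ≤ c k) (hc : Summable c) (h : ∀ k, a (k + 1) ≤ ρ * a k + c k) :
    Summable a := by
  refine summable_of_sum_range_le (c := (a 0 + ∑' k, c k) / (1 - ρ)) ha fun n => ?_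
  rw [le_div_iff₀ (by linarith)]
  have h1 : ∑ k ∈ Finset.range (n + 1), a k
      ≤ a 0 + (ρ * ∑ k ∈ Finset.range n, a k + ∑ k ∈ Finset.range n, c k) := by
    rw [Finset.sum_range_succ', add_comm, Finset.mul_sum, ← Finset.sum_add_distrib]
    gcongr with k _
    exact h k
  have h2 := hc.sum_le_tsum (Finset.range n) (fun k _ => hc0 k)
  rw [Finset.sum_range_succ] at h1
  nlinarith [ha n]

/-- Lemma 8: along the CDSGD iterates `X_{k+1} = Π·X_k − α_k·G_k` with `X₁ = 0`,
`E[‖G_k‖] ≤ L`, nonincreasing steps with `Σ α_k² < ∞`, one has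
`Σ_{k=2}^{∞} α_k·E[‖(I − Π)·X_k‖] < ∞`. -/
theorem cdsgd_summable_weighted_disagreement {N : ℕ} (hN : 2 ≤ N) {Ω : Type*}
    {m0 : MeasurableSpace Ω} (P : Measure Ω) [IsProbabilityMeasure P]
    (Pi : Matrix (Fin N) (Fin N) ℝ) (hsymm : Pi.IsHermitian)
    (hnonneg : ∀ i j, 0 ≤ Pi i j)
    (hstoch : Pi.mulVec (fun _ => 1) = fun _ => 1)
    (hpsd : (1 - Pi).PosSemidef) (hpd : Pi.PosDef)
    (hlam2 : eigAsc Pi hsymm ⟨N - 2, by omega⟩ < 1)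
    (α : ℕ → ℝ) (hαpos : ∀ k, 1 ≤ k → 0 < α k)
    (hαmono : ∀ k l, 1 ≤ k → k ≤ l → α l ≤ α k)
    (hαsq : Summable (fun k => (α k) ^ 2))
    (L : ℝ) (hL : 0 < L)
    (X G : ℕ → Ω → EuclideanSpace ℝ (Fin N))
    (hX1 : ∀ᵐ ω ∂P, X 1 ω = 0)
    (hGmeas : ∀ k, AEStronglyMeasurable (G k) P)
    (hGint : ∀ k, Integrable (fun ω => ‖G k ω‖) P)
    (hGbound : ∀ k, (∫ ω, ‖G k ω‖ ∂P) ≤ L)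
    (hupdate : ∀ k, 1 ≤ k → ∀ ω,
      X (k + 1) ω = (Matrix.toEuclideanLin Pi) (X k ω) - α k • G k ω) :
    Summable (fun k : ℕ =>
      α (k + 2) * ∫ ω, ‖(Matrix.toEuclideanLin (1 - Pi)) (X (k + 2) ω)‖ ∂P) := by
  obtain ⟨ρ, hρ0, hρ1, hρ⟩ := aux_contract hN Pi hsymm hpsd hpd
  set T : EuclideanSpace ℝ (Fin N) →L[ℝ] EuclideanSpace ℝ (Fin N) :=
    LinearMap.toContinuousLinearMap (Matrix.toEuclideanLin Pi) with hT
  set S : EuclideanSpace ℝ (Fin N) →L[ℝ] EuclideanSpace ℝ (Fin N) :=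
    LinearMap.toContinuousLinearMap (Matrix.toEuclideanLin (1 - Pi)) with hS
  have hTe : ∀ x, Matrix.toEuclideanLin Pi x = T x := fun x => rfl
  have hSe : ∀ x, Matrix.toEuclideanLin (1 - Pi) x = S x := fun x => rfl
  simp only [hTe, hSe] at hρ hupdate ⊢
  have hST : ∀ x, S x = x - T x := by
    intro x
    rw [← hSe, ← hTe]
    simp [map_sub, Matrix.toEuclideanLin]
  have hcomm : ∀ x, S (T x) = T (S x) := by
    intro x
    rw [hST, hST, map_sub]
  have hGi : ∀ k, Integrable (G k) P := fun k =>
    (integrable_norm_iff (hGmeas k)).mp (hGint k)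
  have hXi : ∀ k, Integrable (X (k + 1)) P := by
    intro k
    induction k with
    | zero =>
      have h0 : (fun _ : Ω => (0 : EuclideanSpace ℝ (Fin N))) =ᵐ[P] X (0 + 1) := by
        filter_upwards [hX1] with ω hω
        exact hω.symm
      exact (integrable_zero Ω _ P).congr h0
    | succ k ih =>
      have h0 : X (k + 1 + 1) = fun ω => T (X (k + 1) ω) - α (k + 1) • G (k + 1) ω :=
        funext fun ω => hupdate (k + 1) (by omega) ω
      rw [h0]
      exact (T.integrable_comp ih).sub ((hGi (k + 1)).smul (α (k + 1)))
  have hSXi : ∀ k, Integrable (fun ω => ‖S (X (k + 1) ω)‖) P := fun k =>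
    (S.integrable_comp (hXi k)).norm
  have hrec : ∀ k, (∫ ω, ‖S (X (k + 1 + 1) ω)‖ ∂P)
      ≤ ρ * (∫ ω, ‖S (X (k + 1) ω)‖ ∂P) + α (k + 1) * (‖S‖ * L) := by
    intro k
    have hα := hαpos (k + 1) (by omega)
    calc (∫ ω, ‖S (X (k + 1 + 1) ω)‖ ∂P)
        ≤ ∫ ω, (ρ * ‖S (X (k + 1) ω)‖ + α (k + 1) * ‖S‖ * ‖G (k + 1) ω‖) ∂P := by
          refine integral_mono (hSXi (k + 1))
            (((hSXi k).const_mul _).add ((hGint _).const_mul _)) fun ω => ?_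
          simp only
          rw [hupdate (k + 1) (by omega) ω, map_sub, hcomm, map_smul]
          refine (norm_sub_le _ _).trans ?_
          rw [norm_smul, Real.norm_of_nonneg hα.le, mul_assoc]
          gcongr
          · exact hρ _
          · exact S.le_opNorm _
      _ = ρ * (∫ ω, ‖S (X (k + 1) ω)‖ ∂P) + α (k + 1) * ‖S‖ * ∫ ω, ‖G (k + 1) ω‖ ∂P := by
          rw [integral_add ((hSXi k).const_mul _) ((hGint _).const_mul _),
            integral_const_mul, integral_const_mul]
      _ ≤ _ := by
          rw [← mul_assoc]
          gcongr
          exact hGbound _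
  have he0 : ∀ k, 0 ≤ ∫ ω, ‖S (X (k + 1) ω)‖ ∂P := fun k =>
    integral_nonneg fun ω => norm_nonneg _
  have hmain : Summable (fun k : ℕ => α (k + 1) * ∫ ω, ‖S (X (k + 1) ω)‖ ∂P) := by
    refine aux_summable _ (fun k => (α (k + 1)) ^ 2 * (‖S‖ * L)) ρ hρ1 hρ0
      (fun k => mul_nonneg (hαpos _ (by omega)).le (he0 k)) (fun k => by positivity)
      (((summable_nat_add_iff 1).mpr hαsq).mul_right _) fun k => ?_
    have hα := hαpos (k + 1) (by omega)
    have hm := hαmono (k + 1) (k + 1 + 1) (by omega) (by omega)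
    calc α (k + 1 + 1) * (∫ ω, ‖S (X (k + 1 + 1) ω)‖ ∂P)
        ≤ α (k + 1) * (∫ ω, ‖S (X (k + 1 + 1) ω)‖ ∂P) :=
          mul_le_mul_of_nonneg_right hm (he0 (k + 1))
      _ ≤ α (k + 1) * (ρ * (∫ ω, ‖S (X (k + 1) ω)‖ ∂P) + α (k + 1) * (‖S‖ * L)) :=
          mul_le_mul_of_nonneg_left (hrec k) hα.le
      _ = _ := by ring
  exact (summable_nat_add_iff 1).mpr hmain
end
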